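/- For all positive integers i, n, k with n − k > μ_i it holds that F_{n−k−2} ≤ W*_{i,n−k} < F_{n−k}, where W*_{i,n−k} = (−1)^k ( F_{n−1} W_{i,k} − F_n W_{i,k−1} ). In particular 0 < W*_{i,n−k} < F_n. -/

import Mathlib

open Real

noncomputable def phi : ℝ := (1 + Real.sqrt 5) / 2

noncomputable def W (i : ℕ) : ℕ → ℤ
  | 0 => ⌊phi ^ 2 * (⌊phi * i⌋ : ℝ)⌋ - ⌊phi * (⌊phi * i⌋ : ℝ)⌋
  | 1 => ⌊phi * (⌊phi * i⌋ : ℝ)⌋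
  | 2 => ⌊phi ^ 2 * (⌊phi * i⌋ : ℝ)⌋
  | (k + 3) => W i (k + 2) + W i (k + 1)

noncomputable def wplus (i : ℕ) : ℝ := phi⁻¹ ^ 2 * (W i 1 : ℝ) + phi⁻¹ * (W i 2 : ℝ)

noncomputable def wminus (i : ℕ) : ℝ := phi ^ 2 * (W i 1 : ℝ) - phi * (W i 2 : ℝ)

noncomputable def eta (i : ℕ) : ℝ := -(wplus i * wminus i)


noncomputable def mu (i : ℕ) : ℕ := sInf {m : ℕ | 0 < m ∧ 2 * W i 1 < (Nat.fib (m + 2) : ℤ)}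

noncomputable def Wstar (i n k : ℕ) : ℤ :=
  (-1) ^ k * ((Nat.fib (n - 1) : ℤ) * W i k - (Nat.fib n : ℤ) * W i (k - 1))

/-!
Put `a = ⌊φ i⌋` and `m = n - k`. Then `W_{i,0} = a` and `W_{i,1} = a + i - 1`, and since the rows
satisfy the Fibonacci recurrence, `W*_{i,m} = F_{m+1} W_{i,0} - F_m W_{i,1}` for every `k`, i.e.
`W*_{i,m} = F_m - (F_m i - F_{m-1} a)`. So the bounds say `F_{m-1} a < F_m i ≤ F_{m-1} (a + 1)`:
the floor of `φ i` does not change when `φ` is replaced by its convergent `F_m / F_{m-1}`.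

Since `F_m = φ F_{m-1} + ψ^{m-1}`, the integer `F_{m-1} b - F_m i` differs from `F_{m-1} (b - φ i)`
by `|i ψ^{m-1}|`, which is less than `1` as soon as `i ≤ F_{m-1}`; taking `b = a` and `b = a + 1`
gives both weak inequalities. The first is strict because `F_{m-1}` and `F_m` are coprime and
`0 < a < F_m`. Finally `a < F_m` (hence also `i ≤ F_{m-1}`) holds for `m > μ_i`, as
`2 a ≤ 2 W_{i,1} < F_{m+1} ≤ 2 F_m`.
-/

theorem fib_lt_goldenRatio_pow (n : ℕ) : (Nat.fib n : ℝ) < goldenRatio ^ n := by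
  cases n with
  | zero => simp
  | succ n =>
    calc (Nat.fib (n + 1) : ℝ) < goldenRatio * Nat.fib (n + 1) :=
          lt_mul_of_one_lt_left (by exact_mod_cast Nat.fib_pos.2 n.succ_pos) one_lt_goldenRatio
      _ ≤ goldenRatio * Nat.fib (n + 1) + Nat.fib n := le_add_of_nonneg_right (Nat.cast_nonneg _)
      _ = goldenRatio ^ (n + 1) := goldenRatio_mul_fib_succ_add_fib n

theorem abs_natCast_mul_goldenConj_pow_lt_one {i p : ℕ} (hi : i ≤ Nat.fib p) :
    |(i : ℝ) * goldenConj ^ p| < 1 := by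
  calc |(i : ℝ) * goldenConj ^ p| = i * |goldenConj ^ p| := by rw [abs_mul, Nat.abs_cast]
    _ < goldenRatio ^ p * |goldenConj ^ p| := by
      have hi' : (i : ℝ) < goldenRatio ^ p :=
        (Nat.cast_le.2 hi).trans_lt (fib_lt_goldenRatio_pow p)
      gcongr
      exact abs_pos.2 (pow_ne_zero p goldenConj_ne_zero)
    _ = |(goldenRatio * goldenConj) ^ p| := by
      rw [mul_pow, abs_mul, abs_of_pos (pow_pos goldenRatio_pos p)]
    _ = 1 := by rw [goldenRatio_mul_goldenConj, abs_neg_one_pow]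

theorem fib_mul_sub_fib_succ_mul (b x : ℝ) (p : ℕ) :
    Nat.fib p * b - Nat.fib (p + 1) * x
      = Nat.fib p * (b - goldenRatio * x) - x * goldenConj ^ p := by
  linear_combination -x * fib_succ_sub_goldenRatio_mul_fib p

theorem fib_mul_le_fib_succ_mul {i p : ℕ} {b : ℤ} (hi : i ≤ Nat.fib p)
    (hb : (b : ℝ) ≤ goldenRatio * i) : (Nat.fib p : ℤ) * b ≤ Nat.fib (p + 1) * i := by
  have herr := neg_lt_of_abs_lt (abs_natCast_mul_goldenConj_pow_lt_one hi)
  have hmain : (Nat.fib p : ℝ) * (b - goldenRatio * i) ≤ 0 :=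
    mul_nonpos_of_nonneg_of_nonpos (Nat.cast_nonneg _) (sub_nonpos.2 hb)
  have hlt : (Nat.fib p : ℝ) * b - Nat.fib (p + 1) * i < 1 := by
    rw [fib_mul_sub_fib_succ_mul]; linarith
  have hlt' : (Nat.fib p : ℤ) * b - Nat.fib (p + 1) * i < 1 := by exact_mod_cast hlt
  lia

theorem fib_succ_mul_le_fib_mul {i p : ℕ} {b : ℤ} (hi : i ≤ Nat.fib p)
    (hb : goldenRatio * i ≤ b) : (Nat.fib (p + 1) : ℤ) * i ≤ Nat.fib p * b := by
  have herr := lt_of_abs_lt (abs_natCast_mul_goldenConj_pow_lt_one hi)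
  have hmain : (0 : ℝ) ≤ Nat.fib p * (b - goldenRatio * i) :=
    mul_nonneg (Nat.cast_nonneg _) (sub_nonneg.2 hb)
  have hlt : (-1 : ℝ) < Nat.fib p * b - Nat.fib (p + 1) * i := by
    rw [fib_mul_sub_fib_succ_mul]; linarith
  have hlt' : (-1 : ℤ) < Nat.fib p * b - Nat.fib (p + 1) * i := by exact_mod_cast hlt
  lia

theorem fib_mul_ne_fib_succ_mul {a : ℤ} {p : ℕ} (ha : 0 < a) (hap : a < Nat.fib (p + 1)) (b : ℤ) :
    (Nat.fib p : ℤ) * a ≠ Nat.fib (p + 1) * b := by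
  intro heq
  have hcop : IsCoprime (Nat.fib (p + 1) : ℤ) (Nat.fib p) :=
    (Nat.isCoprime_iff_coprime.2 (Nat.fib_coprime_fib_succ p)).symm
  exact (Int.le_of_dvd ha (hcop.dvd_of_dvd_mul_left ⟨b, heq⟩)).not_gt hap

theorem le_fib_of_floor_goldenRatio_mul_lt_fib_succ {i p : ℕ}
    (h : ⌊goldenRatio * i⌋ < Nat.fib (p + 1)) : i ≤ Nat.fib p := by
  have hconj : goldenConj ^ p ≤ 1 :=
    (le_abs_self _).trans <| by
      rw [abs_pow]
      exact pow_le_one₀ (abs_nonneg _)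
        (abs_le.2 ⟨neg_one_lt_goldenConj.le, goldenConj_neg.le.trans zero_le_one⟩)
  have hlt : goldenRatio * i < goldenRatio * (Nat.fib p + 1) := by
    calc goldenRatio * i < Nat.fib (p + 1) := by exact_mod_cast Int.floor_lt.1 h
      _ = goldenRatio * Nat.fib p + goldenConj ^ p := by
        rw [← fib_succ_sub_goldenRatio_mul_fib]; ring
      _ < goldenRatio * (Nat.fib p + 1) := by linarith [one_lt_goldenRatio]
  exact Nat.lt_succ_iff.1 (by exact_mod_cast lt_of_mul_lt_mul_left hlt goldenRatio_pos.le)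

theorem le_floor_goldenRatio_mul (i : ℕ) : (i : ℤ) ≤ ⌊goldenRatio * i⌋ :=
  Int.le_floor.2 <| by
    exact_mod_cast le_mul_of_one_le_left (Nat.cast_nonneg i) one_lt_goldenRatio.le

theorem floor_goldenRatio_mul_pos {i : ℕ} (hi : 0 < i) : 0 < ⌊goldenRatio * i⌋ :=
  (Int.natCast_pos.2 hi).trans_le (le_floor_goldenRatio_mul i)

theorem fib_mul_floor_lt_fib_succ_mul {i p : ℕ} (hi : 0 < i)
    (h : ⌊goldenRatio * i⌋ < Nat.fib (p + 1)) :
    (Nat.fib p : ℤ) * ⌊goldenRatio * i⌋ < Nat.fib (p + 1) * i :=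
  (fib_mul_le_fib_succ_mul (le_fib_of_floor_goldenRatio_mul_lt_fib_succ h)
    (Int.floor_le _)).lt_of_ne (fib_mul_ne_fib_succ_mul (floor_goldenRatio_mul_pos hi) h i)

theorem fib_succ_mul_le_fib_mul_floor_add_one {i p : ℕ}
    (h : ⌊goldenRatio * i⌋ < Nat.fib (p + 1)) :
    (Nat.fib (p + 1) : ℤ) * i ≤ Nat.fib p * (⌊goldenRatio * i⌋ + 1) :=
  fib_succ_mul_le_fib_mul (le_fib_of_floor_goldenRatio_mul_lt_fib_succ h) <| by
    exact_mod_cast (Int.lt_floor_add_one (goldenRatio * i)).le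

theorem floor_goldenRatio_mul_floor {i : ℕ} (hi : 0 < i) :
    ⌊goldenRatio * (⌊goldenRatio * i⌋ : ℝ)⌋ = ⌊goldenRatio * i⌋ + i - 1 := by
  set a := ⌊goldenRatio * i⌋
  have hirr : Irrational (goldenRatio * i) := goldenRatio_irrational.mul_natCast hi.ne'
  have hfract_pos : 0 < goldenRatio * i - a :=
    sub_pos.2 ((Int.floor_le _).lt_of_ne (hirr.ne_int a).symm)
  have hfract_lt : goldenRatio * i - a < 1 := sub_lt_iff_lt_add'.2 (Int.lt_floor_add_one _)
  have hexpand : goldenRatio * a = a + i - (goldenRatio - 1) * (goldenRatio * i - a) := by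
    linear_combination (i : ℝ) * goldenRatio_sq
  have hdef_pos : 0 < (goldenRatio - 1) * (goldenRatio * i - a) :=
    mul_pos (sub_pos.2 one_lt_goldenRatio) hfract_pos
  have hdef_lt : (goldenRatio - 1) * (goldenRatio * i - a) < 1 :=
    mul_lt_one_of_nonneg_of_lt_one_right (by linarith [goldenRatio_lt_two])
      hfract_pos.le hfract_lt
  rw [Int.floor_eq_iff, hexpand]
  push_cast
  constructor <;> linarith

theorem W_add_two (i k : ℕ) : W i (k + 2) = W i (k + 1) + W i k := by
  cases k with
  | zero => simp only [W]; ring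
  | succ k => simp only [W]

theorem W_zero (i : ℕ) : W i 0 = ⌊goldenRatio * i⌋ := by
  simp only [W, show phi = goldenRatio from rfl]
  rw [goldenRatio_sq, add_mul, one_mul, Int.floor_add_intCast, add_sub_cancel_left]

theorem W_one {i : ℕ} (hi : 0 < i) : W i 1 = W i 0 + i - 1 := by
  rw [W_zero]
  exact floor_goldenRatio_mul_floor hi

theorem W_zero_pos {i : ℕ} (hi : 0 < i) : 0 < W i 0 := by
  rw [W_zero]
  exact floor_goldenRatio_mul_pos hi

theorem Wstar_add_succ (i m k : ℕ) :
    Wstar i (m + (k + 1)) (k + 1) = Nat.fib (m + 1) * W i 0 - Nat.fib m * W i 1 := by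
  induction k with
  | zero => simp [Wstar]
  | succ k ih =>
    rw [← ih]
    simp only [Wstar, ← add_assoc, Nat.add_sub_cancel, Nat.fib_add_two, W_add_two]
    push_cast
    ring

theorem Wstar_add_succ_eq_fib_sub {i : ℕ} (hi : 0 < i) (p k : ℕ) :
    Wstar i (p + 1 + (k + 1)) (k + 1)
      = Nat.fib (p + 1) - (Nat.fib (p + 1) * i - Nat.fib p * W i 0) := by
  rw [Wstar_add_succ, W_one hi, Nat.fib_add_two]
  push_cast
  ring

theorem two_mul_W_one_lt_fib_mu_add_two (i : ℕ) : 2 * W i 1 < Nat.fib (mu i + 2) := by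
  have hne : {m : ℕ | 0 < m ∧ 2 * W i 1 < (Nat.fib (m + 2) : ℤ)}.Nonempty := by
    refine ⟨(2 * W i 1).toNat + 3, by lia, ?_⟩
    have := Nat.le_fib_self (n := (2 * W i 1).toNat + 3 + 2) (by lia)
    lia
  exact (Nat.sInf_mem hne).2

theorem W_zero_lt_fib_of_mu_lt {i m : ℕ} (hi : 0 < i) (h : mu i < m) : W i 0 < Nat.fib m := by
  have hmono : Nat.fib (mu i + 2) ≤ Nat.fib (m + 1) := Nat.fib_mono (by lia)
  have hdouble : Nat.fib (m + 1) ≤ 2 * Nat.fib m := by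
    obtain ⟨p, rfl⟩ := Nat.exists_eq_add_of_lt h
    have := Nat.fib_le_fib_succ (n := mu i + p)
    rw [Nat.fib_add_two]
    lia
  have hmu := two_mul_W_one_lt_fib_mu_add_two i
  have hW := W_one hi
  lia

theorem dual_array_bounds_general (i n k : ℕ) (hi : 0 < i) (hk : 0 < k)
    (h : W i 0 < (Nat.fib (n - k) : ℤ)) :
    ((Nat.fib (n - k - 2) : ℤ) ≤ Wstar i n k ∧ Wstar i n k < (Nat.fib (n - k) : ℤ)) ∧
      (0 < Wstar i n k ∧ Wstar i n k < (Nat.fib n : ℤ)) := by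
  have hW := W_zero_pos hi
  have hnk : 3 ≤ n - k := by
    by_contra! hlt
    have : Nat.fib (n - k) ≤ Nat.fib 2 := Nat.fib_mono (by lia)
    rw [Nat.fib_two] at this
    lia
  obtain ⟨j, rfl⟩ := Nat.exists_eq_add_one.2 hk
  obtain ⟨p, rfl⟩ : ∃ p, n = p + 2 + 1 + (j + 1) := ⟨n - (j + 1) - 3, by lia⟩
  simp only [Nat.add_sub_cancel, show p + 2 + 1 - 2 = p + 1 by lia] at h ⊢
  have hfib : Nat.fib (p + 2 + 1) = Nat.fib (p + 1) + Nat.fib (p + 2) := Nat.fib_add_two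
  have hpos : 0 < Nat.fib (p + 1) := Nat.fib_pos.2 p.succ_pos
  have hmono : Nat.fib (p + 2 + 1) ≤ Nat.fib (p + 2 + 1 + (j + 1)) := Nat.fib_mono (by lia)
  rw [W_zero] at h
  have hupper := fib_mul_floor_lt_fib_succ_mul hi h
  have hlower := fib_succ_mul_le_fib_mul_floor_add_one h
  rw [Wstar_add_succ_eq_fib_sub hi, W_zero]
  lia

/-- Bounds for the dual array: `F_{n−k−2} ≤ W*_{i,n−k} < F_{n−k}`,
in particular `0 < W*_{i,n−k} < F_n`. -/
theorem dual_array_bounds (i n k : ℕ) (hi : 0 < i) (hn : 0 < n) (hk : 0 < k)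
    (h : (mu i : ℤ) < (n : ℤ) - (k : ℤ)) :
    ((Nat.fib (n - k - 2) : ℤ) ≤ Wstar i n k ∧ Wstar i n k < (Nat.fib (n - k) : ℤ)) ∧
      (0 < Wstar i n k ∧ Wstar i n k < (Nat.fib n : ℤ)) :=
  dual_array_bounds_general i n k hi hk (W_zero_lt_fib_of_mu_lt hi (by lia))
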